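/- Let G be a finite group, let (σ_j)_{j∈J} be a complete family of irreducibles for G, let k ≥ 1, and let ρ be a unitary representation of G^k on a finite-dimensional complex inner product space V. Then for every unit vector b ∈ V and every j ∈ J, the nonnegative real number Σ_{I₁ ⊆ {1,…,k}} Σ_{I₂ ⊆ {1,…,k}} (d_j/|G|) Σ_{g∈G} conj(χ_j(g)) ⟨b, ρ(g^{I₁}) b⟩ · conj(⟨b, ρ(g^{I₂}) b⟩) is at most 2^k · d_j² · Σ_{I ⊆ {1,…,k}} Σ_{j'∈J} ‖Π_{j'}^I b‖² / d_{j'}, where Π_{j'}^I = (d_{j'}/|G|) Σ_{g∈G} conj(χ_{j'}(g)) ρ(g^I). -/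

import Mathlib

noncomputable section

open scoped BigOperators InnerProductSpace

def IsUnitaryRep {G V : Type*} [Group G] [NormedAddCommGroup V] [InnerProductSpace ℂ V]
    (ρ : Representation ℂ G V) : Prop :=
  ∀ (g : G) (v w : V), ⟪ρ g v, ρ g w⟫_ℂ = ⟪v, w⟫_ℂ

def IsIrreducibleRep {G V : Type*} [Group G] [AddCommGroup V] [Module ℂ V]
    (ρ : Representation ℂ G V) : Prop :=
  (∃ v : V, v ≠ 0) ∧
    ∀ W : Submodule ℂ V, (∀ (g : G) (v : V), v ∈ W → ρ g v ∈ W) → W = ⊥ ∨ W = ⊤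

def RepIso {G V₁ V₂ : Type*} [Group G] [AddCommGroup V₁] [Module ℂ V₁]
    [AddCommGroup V₂] [Module ℂ V₂]
    (ρ₁ : Representation ℂ G V₁) (ρ₂ : Representation ℂ G V₂) : Prop :=
  ∃ e : V₁ ≃ₗ[ℂ] V₂, ∀ (g : G) (v : V₁), e (ρ₁ g v) = ρ₂ g (e v)

def repChar {G V : Type*} [Group G] [AddCommGroup V] [Module ℂ V]
    (ρ : Representation ℂ G V) (g : G) : ℂ := LinearMap.trace ℂ V (ρ g)

def IsCompleteFamily {G : Type*} [Group G] {J : Type*}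
    (W : J → Type*) [∀ j, NormedAddCommGroup (W j)] [∀ j, InnerProductSpace ℂ (W j)]
    [∀ j, FiniteDimensional ℂ (W j)]
    (σ : ∀ j, Representation ℂ G (W j)) : Prop :=
  (∀ j, IsUnitaryRep (σ j)) ∧ (∀ j, IsIrreducibleRep (σ j)) ∧
    (∀ j j', j ≠ j' → ¬ RepIso (σ j) (σ j')) ∧
    (∀ (U : Type) [AddCommGroup U] [Module ℂ U] [FiniteDimensional ℂ U]
      (τ : Representation ℂ G U), IsIrreducibleRep τ → ∃ j, RepIso τ (σ j))

def isoProj {G V : Type*} [Group G] [Fintype G] [AddCommGroup V] [Module ℂ V]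
    (d : ℕ) (χ : G → ℂ) (ρ : Representation ℂ G V) : V →ₗ[ℂ] V :=
  ((d : ℂ) / (Fintype.card G : ℂ)) • ∑ g : G, starRingEnd ℂ (χ g) • (ρ g : V →ₗ[ℂ] V)

def onI {G : Type*} [One G] {k : ℕ} (g : G) (I : Finset (Fin k)) : Fin k → G :=
  fun i => if i ∈ I then g else 1

def invProj {G V : Type*} [Group G] [AddCommGroup V] [Module ℂ V] {k : ℕ}
    (ρ : Representation ℂ (Fin k → G) V) (m : G) : V →ₗ[ℂ] V :=
  ((2 : ℂ) ^ k)⁻¹ • ∑ I : Finset (Fin k), (ρ (onI m I) : V →ₗ[ℂ] V)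

def isoProjI {G V : Type*} [Group G] [Fintype G] [AddCommGroup V] [Module ℂ V] {k : ℕ}
    (ρ : Representation ℂ (Fin k → G) V) (d : ℕ) (χ : G → ℂ) (I : Finset (Fin k)) :
    V →ₗ[ℂ] V :=
  ((d : ℂ) / (Fintype.card G : ℂ)) • ∑ g : G, starRingEnd ℂ (χ g) • (ρ (onI g I) : V →ₗ[ℂ] V)

open scoped ComplexOrder

/-!
For a unitary representation `τ` of `G` let `T` be the average over `g` of the rank-one operators
`|τ(g) b⟩⟨τ(g) b|` and let `D` act as `1 / d_j` on the `σ_j`-isotypic component. The point is the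
operator inequality `T ≤ ‖b‖² D`, whose quadratic form at `b` bounds the mean square of the matrix
coefficient `⟪b, τ(g) b⟫` by `‖b‖² ∑ j, ‖Π_j b‖² / d_j`. The difference `S = ‖b‖² D - T` is
symmetric and commutes with `τ`, so each of its eigenspaces contains a copy of some `σ_j`. If the
eigenvalue is `μ`, then `T` is the scalar `‖b‖² / d_j - μ` on that copy, and by Bessel's inequality
its trace there is at most `‖b‖²`, so `μ ≥ 0`.

The double sum of the theorem is `d_j` times the mean of `conj χ_j(g) * |∑ I, ⟪b, ρ(g^I) b⟫|²`.
It remains to use `|χ_j| ≤ d_j`, the Cauchy-Schwarz inequality over the `2 ^ k` subsets, and the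
bound above for each restriction `g ↦ ρ(g^I)`.
-/

section Unitary

variable {G V : Type*} [Group G] [NormedAddCommGroup V] [InnerProductSpace ℂ V]
  {ρ : Representation ℂ G V}

lemma IsUnitaryRep.inner_apply_left (hρ : IsUnitaryRep ρ) (g : G) (v w : V) :
    ⟪ρ g v, w⟫_ℂ = ⟪v, ρ g⁻¹ w⟫_ℂ := by
  simpa using hρ g v (ρ g⁻¹ w)

lemma IsUnitaryRep.norm_apply (hρ : IsUnitaryRep ρ) (g : G) (v : V) : ‖ρ g v‖ = ‖v‖ := by
  rw [norm_eq_sqrt_re_inner (𝕜 := ℂ), hρ, ← norm_eq_sqrt_re_inner]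

variable [FiniteDimensional ℂ V]

lemma IsUnitaryRep.conj_repChar (hρ : IsUnitaryRep ρ) (g : G) :
    starRingEnd ℂ (repChar ρ g) = repChar ρ g⁻¹ := by
  simp only [repChar, LinearMap.trace_eq_sum_inner _ (stdOrthonormalBasis ℂ V), map_sum,
    inner_conj_symm, hρ.inner_apply_left]

lemma IsUnitaryRep.norm_repChar_le (hρ : IsUnitaryRep ρ) (g : G) :
    ‖repChar ρ g‖ ≤ Module.finrank ℂ V := by
  set e := stdOrthonormalBasis ℂ V
  have hcoeff (i) : ‖⟪e i, ρ g (e i)⟫_ℂ‖ ≤ 1 := by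
    simpa [hρ.norm_apply] using norm_inner_le_norm (𝕜 := ℂ) (e i) (ρ g (e i))
  rw [repChar, LinearMap.trace_eq_sum_inner _ e]
  simpa using norm_sum_le_of_le Finset.univ fun i _ => hcoeff i

lemma IsUnitaryRep.sum_conj_repChar_mul_le [Fintype G] (hρ : IsUnitaryRep ρ) {f : G → ℝ}
    (hf₀ : ∀ g, 0 ≤ f g) (hf : ∀ g, f g⁻¹ = f g) :
    ∑ g, starRingEnd ℂ (repChar ρ g) * f g ≤ ((Module.finrank ℂ V * ∑ g, f g : ℝ) : ℂ) := by
  set z := ∑ g, starRingEnd ℂ (repChar ρ g) * f g with hz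
  have hreal : starRingEnd ℂ z = z := by
    rw [hz, map_sum, ← Equiv.sum_comp (Equiv.inv G)]
    simp [hρ.conj_repChar, hf]
  have hnorm : ‖z‖ ≤ Module.finrank ℂ V * ∑ g, f g := by
    rw [Finset.mul_sum]
    refine norm_sum_le_of_le _ fun g _ => ?_
    rw [norm_mul, RCLike.norm_conj, Complex.norm_of_nonneg (hf₀ g)]
    exact mul_le_mul_of_nonneg_right (hρ.norm_repChar_le g) (hf₀ g)
  rw [← Complex.conj_eq_iff_re.1 hreal, Complex.real_le_real]
  exact (Complex.re_le_norm z).trans hnorm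

end Unitary

section Irreducible

variable {G V W : Type*} [Group G] [AddCommGroup V] [Module ℂ V] [AddCommGroup W] [Module ℂ W]

lemma IsIrreducibleRep.isIrreducible {ρ : Representation ℂ G V} (hρ : IsIrreducibleRep ρ) :
    ρ.IsIrreducible := by
  obtain ⟨⟨v, hv⟩, hmin⟩ := hρ
  have hnt : Nontrivial (Subrepresentation ρ) := by
    refine ⟨⊥, ⊤, fun h => hv ?_⟩
    have hv_bot : v ∈ (⊥ : Subrepresentation ρ) := h ▸ Submodule.mem_top
    exact hv_bot
  exact ⟨fun S => (hmin S.toSubmodule S.apply_mem_toSubmodule).imp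
    (Subrepresentation.toSubmodule_injective ·) (Subrepresentation.toSubmodule_injective ·)⟩

lemma repIso_iff_nonempty_equiv {ρ : Representation ℂ G V} {σ : Representation ℂ G W} :
    RepIso ρ σ ↔ Nonempty (ρ.Equiv σ) :=
  ⟨fun ⟨e, he⟩ => ⟨.mk e fun g => LinearMap.ext (he g)⟩,
    fun ⟨φ⟩ => ⟨φ.toLinearEquiv, φ.toIntertwiningMap.isIntertwining⟩⟩

lemma RepIso.isIrreducibleRep {ρ : Representation ℂ G V} {σ : Representation ℂ G W}
    (h : RepIso ρ σ) (hρ : IsIrreducibleRep ρ) : IsIrreducibleRep σ := by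
  obtain ⟨e, he⟩ := h
  obtain ⟨⟨v, hv⟩, hmin⟩ := hρ
  refine ⟨⟨e v, e.map_ne_zero_iff.2 hv⟩, fun S hS => ?_⟩
  have hcomap (g : G) (v : V) (hv : v ∈ S.comap e.toLinearMap) : ρ g v ∈ S.comap e.toLinearMap := by
    simpa [he] using hS g _ hv
  have hmap := Submodule.map_comap_eq_of_surjective e.surjective S
  exact (hmin _ hcomap).imp (fun h => by rw [← hmap, h, Submodule.map_bot])
    fun h => by rw [← hmap, h, Submodule.map_top, e.range]

lemma isIrreducibleRep_toRepresentation {ρ : Representation ℂ G V} {S : Subrepresentation ρ}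
    (hS : IsAtom S) : IsIrreducibleRep S.toRepresentation := by
  refine ⟨?_, fun T hT => ?_⟩
  · have hne : S.toSubmodule ≠ ⊥ :=
      fun h => hS.ne_bot (Subrepresentation.toSubmodule_injective h)
    have := Submodule.nontrivial_iff_ne_bot.2 hne
    exact exists_ne 0
  · let T' : Subrepresentation ρ :=
      ⟨T.map S.toSubmodule.subtype, by
        rintro g _ ⟨v, hv, rfl⟩
        exact ⟨_, hT g v hv, rfl⟩⟩
    have hinj := Submodule.map_injective_of_injective S.toSubmodule.subtype_injective
    have hle : T' ≤ S := Submodule.map_subtype_le _ _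
    refine (hS.le_iff.1 hle).imp (fun h => ?_) fun h => ?_
    · exact hinj ((congrArg Subrepresentation.toSubmodule h).trans (Submodule.map_bot _).symm)
    · exact hinj ((congrArg Subrepresentation.toSubmodule h).trans
        (Submodule.map_subtype_top _).symm)

lemma exists_isAtom_le [FiniteDimensional ℂ V] {ρ : Representation ℂ G V}
    {S : Subrepresentation ρ} (hS : S ≠ ⊥) : ∃ U, IsAtom U ∧ U ≤ S := by
  have hmono : StrictMono (Subrepresentation.toSubmodule (ρ := ρ)) := fun _ _ h => h
  have := hmono.wellFoundedLT
  have : IsAtomic (Subrepresentation ρ) := inferInstance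
  exact (eq_bot_or_exists_atom_le S).resolve_left hS

lemma IsIrreducibleRep.finrank_pos [FiniteDimensional ℂ V] {ρ : Representation ℂ G V}
    (hρ : IsIrreducibleRep ρ) : 0 < Module.finrank ℂ V :=
  Module.finrank_pos_iff_exists_ne_zero.2 hρ.1

lemma IsIrreducibleRep.finrank_smul_eq_trace_smul [FiniteDimensional ℂ V]
    {ρ : Representation ℂ G V} (hρ : IsIrreducibleRep ρ) {S : V →ₗ[ℂ] V}
    (hS : ∀ g v, S (ρ g v) = ρ g (S v)) :
    (Module.finrank ℂ V : ℂ) • S = LinearMap.trace ℂ V S • LinearMap.id := by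
  have := hρ.isIrreducible
  obtain ⟨c, hc⟩ :=
    (Representation.IsIrreducible.algebraMap_intertwiningMap_bijective_of_isAlgClosed
      (ρ := ρ)).surjective (S.intertwiningMap_of_isIntertwiningMap ρ ρ hS)
  have hSc : S = c • LinearMap.id := by
    ext v
    exact (congr($hc v)).symm
  simp [hSc, smul_smul, mul_comm]

end Irreducible

section CompleteFamily

variable {G J : Type*} [Group G] {W : J → Type*} [∀ j, NormedAddCommGroup (W j)]
  [∀ j, InnerProductSpace ℂ (W j)] [∀ j, FiniteDimensional ℂ (W j)]
  {σ : ∀ j, Representation ℂ G (W j)} {V : Type*} [AddCommGroup V] [Module ℂ V]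
  [FiniteDimensional ℂ V] {τ : Representation ℂ G V}

lemma IsCompleteFamily.exists_repIso (hσ : IsCompleteFamily W σ) (hτ : IsIrreducibleRep τ) :
    ∃ j, RepIso τ (σ j) := by
  let e := (Module.finBasis ℂ V).equivFun
  let κ : Representation ℂ G (Fin (Module.finrank ℂ V) → ℂ) :=
    ((e.conjAlgEquiv ℂ : _ →* _)).comp τ
  have he (g : G) (v : V) : e (τ g v) = κ g (e v) := by simp [κ]
  obtain ⟨j, f, hf⟩ := hσ.2.2.2 _ κ (RepIso.isIrreducibleRep ⟨e, he⟩ hτ)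
  exact ⟨j, e.trans f, fun g v => by simp [he, hf]⟩

lemma IsCompleteFamily.exists_injective_intertwiningMap (hσ : IsCompleteFamily W σ)
    {S : Subrepresentation τ} (hS : S ≠ ⊥) :
    ∃ j, ∃ f : (σ j).IntertwiningMap τ, Function.Injective f ∧ ∀ w, f w ∈ S := by
  obtain ⟨U, hU, hUS⟩ := exists_isAtom_le hS
  obtain ⟨j, hj⟩ := hσ.exists_repIso (isIrreducibleRep_toRepresentation hU)
  let f : U.toRepresentation.IntertwiningMap τ := ⟨U.toSubmodule.subtype, fun _ => rfl⟩
  obtain ⟨e⟩ := repIso_iff_nonempty_equiv.1 hj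
  exact ⟨j, f.comp e.symm.toIntertwiningMap,
    Subtype.val_injective.comp e.symm.toLinearEquiv.injective, fun w => hUS (e.symm w).2⟩

end CompleteFamily

section Positive

variable {V : Type*} [NormedAddCommGroup V] [InnerProductSpace ℂ V] [FiniteDimensional ℂ V]
  {S : V →ₗ[ℂ] V}

lemma isPositive_of_forall_hasEigenvalue (hS : S.IsSymmetric)
    (h : ∀ μ : ℝ, Module.End.HasEigenvalue S (μ : ℂ) → 0 ≤ μ) : S.IsPositive := by
  refine ⟨hS, fun v => ?_⟩
  let e := hS.eigenvectorBasis rfl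
  have hquad : ⟪S v, v⟫_ℂ = ((∑ i, hS.eigenvalues rfl i * ‖⟪e i, v⟫_ℂ‖ ^ 2 : ℝ) : ℂ) := by
    rw [← e.sum_inner_mul_inner]
    push_cast
    refine Finset.sum_congr rfl fun i _ => ?_
    rw [hS, hS.apply_eigenvectorBasis, inner_smul_right, mul_assoc, ← inner_conj_symm v,
      RCLike.conj_mul]
    rfl
  rw [hquad, RCLike.re_eq_complex_re, Complex.ofReal_re]
  exact Finset.sum_nonneg fun i _ =>
    mul_nonneg (h _ (hS.hasEigenvalue_eigenvalues rfl i)) (sq_nonneg _)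

lemma IsCompleteFamily.isPositive_of_forall_intertwiningMap {G J : Type*} [Group G]
    {W : J → Type*} [∀ j, NormedAddCommGroup (W j)] [∀ j, InnerProductSpace ℂ (W j)]
    [∀ j, FiniteDimensional ℂ (W j)] {σ : ∀ j, Representation ℂ G (W j)}
    (hσ : IsCompleteFamily W σ) {τ : Representation ℂ G V} (hS : S.IsSymmetric)
    (hcomm : ∀ g v, S (τ g v) = τ g (S v))
    (h : ∀ j (f : (σ j).IntertwiningMap τ) (μ : ℝ), Function.Injective f →
      (∀ w, S (f w) = (μ : ℂ) • f w) → 0 ≤ μ) : S.IsPositive := by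
  refine isPositive_of_forall_hasEigenvalue hS fun μ hμ => ?_
  let E : Subrepresentation τ :=
    ⟨Module.End.eigenspace S μ, fun g v hv => by
      rw [Module.End.mem_eigenspace_iff] at hv ⊢
      rw [hcomm, hv, map_smul]⟩
  have hE : E ≠ ⊥ := fun hbot => hμ (congrArg Subrepresentation.toSubmodule hbot)
  obtain ⟨j, f, hinj, hf⟩ := hσ.exists_injective_intertwiningMap hE
  exact h j f μ hinj fun w => Module.End.mem_eigenspace_iff.1 (hf w)

end Positive

section IsoProj

variable {G V W : Type*} [Group G] [Fintype G]

section Module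

variable [AddCommGroup V] [Module ℂ V] [AddCommGroup W] [Module ℂ W] {d : ℕ} {χ : G → ℂ}
  {ρ : Representation ℂ G V} {σ : Representation ℂ G W}

lemma isoProj_apply (v : V) :
    isoProj d χ ρ v = (d / Fintype.card G : ℂ) • ∑ g, starRingEnd ℂ (χ g) • ρ g v := by
  simp [isoProj, LinearMap.sum_apply]

lemma map_isoProj (f : ρ.IntertwiningMap σ) (v : V) :
    f (isoProj d χ ρ v) = isoProj d χ σ (f v) := by
  simp only [isoProj_apply, map_smul, map_sum, f.isIntertwining]

lemma isoProj_apply_comm (hχ : ∀ g h, χ (h * g * h⁻¹) = χ g) (h : G) (v : V) :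
    isoProj d χ ρ (ρ h v) = ρ h (isoProj d χ ρ v) := by
  have hsum : ∑ g, starRingEnd ℂ (χ g) • ρ (g * h) v = ∑ g, starRingEnd ℂ (χ g) • ρ (h * g) v := by
    rw [← (MulAut.conj h).toEquiv.sum_comp]
    simp [hχ, -map_mul]
  simpa [isoProj_apply] using congrArg ((d / Fintype.card G : ℂ) • ·) hsum

lemma trace_isoProj :
    LinearMap.trace ℂ V (isoProj d χ ρ) =
      d / Fintype.card G * ∑ g, starRingEnd ℂ (χ g) * repChar ρ g := by
  simp [isoProj, repChar]

end Module

lemma IsUnitaryRep.isSymmetric_isoProj [NormedAddCommGroup V] [InnerProductSpace ℂ V]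
    {ρ : Representation ℂ G V} (hρ : IsUnitaryRep ρ) (d : ℕ) {χ : G → ℂ}
    (hχ : ∀ g, starRingEnd ℂ (χ g) = χ g⁻¹) : (isoProj d χ ρ).IsSymmetric := by
  intro v w
  simp only [isoProj_apply, inner_smul_left, inner_smul_right, sum_inner, inner_sum,
    hρ.inner_apply_left, hχ, map_div₀, map_natCast]
  congr 1
  rw [← Equiv.sum_comp (Equiv.inv G)]
  simp

end IsoProj

section IsotypicProj

variable {G V W : Type*} [Group G] [Fintype G]

/-- The projection of `τ` onto its `σ`-isotypic component, for `σ` irreducible. -/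
abbrev isotypicProj [AddCommGroup V] [Module ℂ V] [AddCommGroup W] [Module ℂ W]
    (σ : Representation ℂ G W) (τ : Representation ℂ G V) : V →ₗ[ℂ] V :=
  isoProj (Module.finrank ℂ W) (repChar σ) τ

lemma isotypicProj_apply_comm [AddCommGroup V] [Module ℂ V] [AddCommGroup W] [Module ℂ W]
    [FiniteDimensional ℂ W] {σ : Representation ℂ G W} {τ : Representation ℂ G V} (h : G) (v : V) :
    isotypicProj σ τ (τ h v) = τ h (isotypicProj σ τ v) :=
  isoProj_apply_comm σ.char_conj h v

variable [NormedAddCommGroup V] [InnerProductSpace ℂ V] [NormedAddCommGroup W]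
  [InnerProductSpace ℂ W] [FiniteDimensional ℂ W] {σ : Representation ℂ G W}
  {τ : Representation ℂ G V}

lemma IsUnitaryRep.isSymmetric_isotypicProj (hσ : IsUnitaryRep σ) (hτ : IsUnitaryRep τ) :
    (isotypicProj σ τ).IsSymmetric :=
  hτ.isSymmetric_isoProj _ hσ.conj_repChar

open Classical in
lemma IsUnitaryRep.trace_isotypicProj [FiniteDimensional ℂ V] (hσ : IsUnitaryRep σ)
    (hσ' : IsIrreducibleRep σ) (hτ : IsIrreducibleRep τ) :
    LinearMap.trace ℂ V (isotypicProj σ τ) =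
      if RepIso σ τ then (Module.finrank ℂ V : ℂ) else 0 := by
  have := hσ'.isIrreducible
  have := hτ.isIrreducible
  have : Invertible (Nat.card G : ℂ) := invertibleOfNonzero (by simp)
  have horth : (Fintype.card G : ℂ)⁻¹ * ∑ g, repChar τ g * repChar σ g⁻¹ =
      if RepIso σ τ then 1 else 0 := by
    rw [repIso_iff_nonempty_equiv, ← Nat.card_eq_fintype_card]
    exact Representation.char_orthonormal τ σ
  have htrace : LinearMap.trace ℂ V (isotypicProj σ τ) =
      Module.finrank ℂ W * if RepIso σ τ then 1 else 0 := by
    rw [trace_isoProj, ← horth, div_eq_mul_inv, mul_assoc]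
    simp only [hσ.conj_repChar, mul_comm]
  rw [htrace]
  split_ifs with h
  · rw [mul_one, h.choose.finrank_eq]
  · exact mul_zero _

open Classical in
lemma IsUnitaryRep.isotypicProj_eq_ite [FiniteDimensional ℂ V] (hσ : IsUnitaryRep σ)
    (hσ' : IsIrreducibleRep σ) (hτ : IsIrreducibleRep τ) :
    isotypicProj σ τ = if RepIso σ τ then LinearMap.id else 0 := by
  have hd : (Module.finrank ℂ V : ℂ) ≠ 0 := by exact_mod_cast hτ.finrank_pos.ne'
  refine (smul_right_injective (V →ₗ[ℂ] V) hd) ?_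
  beta_reduce
  rw [hτ.finrank_smul_eq_trace_smul isotypicProj_apply_comm, hσ.trace_isotypicProj hσ' hτ,
    ite_smul, smul_ite, zero_smul, smul_zero]

end IsotypicProj

section CompleteFamilyIsotypicProj

variable {G J : Type*} [Group G] [Fintype G] {W : J → Type*} [∀ j, NormedAddCommGroup (W j)]
  [∀ j, InnerProductSpace ℂ (W j)] [∀ j, FiniteDimensional ℂ (W j)]
  {σ : ∀ j, Representation ℂ G (W j)}

lemma IsCompleteFamily.isotypicProj_self (hσ : IsCompleteFamily W σ) (j : J) :
    isotypicProj (σ j) (σ j) = LinearMap.id := by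
  rw [(hσ.1 j).isotypicProj_eq_ite (hσ.2.1 j) (hσ.2.1 j),
    if_pos ⟨.refl ℂ (W j), fun _ _ => rfl⟩]

lemma IsCompleteFamily.isotypicProj_of_ne (hσ : IsCompleteFamily W σ) {i j : J} (hij : i ≠ j) :
    isotypicProj (σ i) (σ j) = 0 := by
  rw [(hσ.1 i).isotypicProj_eq_ite (hσ.2.1 i) (hσ.2.1 j), if_neg (hσ.2.2.1 i j hij)]

end CompleteFamilyIsotypicProj

section OrbitFrameOp

variable {G V : Type*} [Group G] [Fintype G] [NormedAddCommGroup V] [InnerProductSpace ℂ V]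
  {τ : Representation ℂ G V} {b : V}

/-- The frame operator `|G|⁻¹ ∑ g, |τ(g) b⟩⟨τ(g) b|` of the orbit of `b`, which encodes the matrix
coefficient `g ↦ ⟪v, τ(g) b⟫` through its mean square, the quadratic form at `v`. -/
def orbitFrameOp (τ : Representation ℂ G V) (b : V) : V →ₗ[ℂ] V :=
  (Fintype.card G : ℂ)⁻¹ • ∑ g, (InnerProductSpace.rankOne ℂ (τ g b) (τ g b)).toLinearMap

lemma orbitFrameOp_apply (v : V) :
    orbitFrameOp τ b v = (Fintype.card G : ℂ)⁻¹ • ∑ g, ⟪τ g b, v⟫_ℂ • τ g b := by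
  simp [orbitFrameOp, LinearMap.sum_apply]

lemma isSymmetric_orbitFrameOp : (orbitFrameOp τ b).IsSymmetric := by
  intro v w
  simp [orbitFrameOp_apply, inner_smul_left, inner_smul_right, sum_inner, inner_sum, mul_comm]

lemma inner_orbitFrameOp_self (v : V) :
    ⟪v, orbitFrameOp τ b v⟫_ℂ = ((Fintype.card G : ℝ)⁻¹ * ∑ g, ‖⟪v, τ g b⟫_ℂ‖ ^ 2 : ℝ) := by
  have hterm (g : G) : ⟪τ g b, v⟫_ℂ * ⟪v, τ g b⟫_ℂ = (‖⟪v, τ g b⟫_ℂ‖ : ℂ) ^ 2 := by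
    rw [← inner_conj_symm, RCLike.conj_mul]
    rfl
  simp only [orbitFrameOp_apply, inner_smul_right, inner_sum, hterm]
  push_cast
  rfl

lemma IsUnitaryRep.orbitFrameOp_apply_comm (hτ : IsUnitaryRep τ) (h : G) (v : V) :
    orbitFrameOp τ b (τ h v) = τ h (orbitFrameOp τ b v) := by
  simp only [orbitFrameOp_apply, map_smul, map_sum]
  rw [← Equiv.sum_comp (Equiv.mulLeft h)]
  simp [hτ h]

lemma IsUnitaryRep.sum_re_inner_orbitFrameOp_le (hτ : IsUnitaryRep τ) {ι : Type*} [Fintype ι]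
    {e : ι → V} (he : Orthonormal ℂ e) :
    ∑ i, (⟪e i, orbitFrameOp τ b (e i)⟫_ℂ).re ≤ ‖b‖ ^ 2 := by
  have hbessel (g : G) : ∑ i, ‖⟪e i, τ g b⟫_ℂ‖ ^ 2 ≤ ‖b‖ ^ 2 :=
    (he.sum_inner_products_le _).trans_eq (by rw [hτ.norm_apply])
  calc ∑ i, (⟪e i, orbitFrameOp τ b (e i)⟫_ℂ).re
      = (Fintype.card G : ℝ)⁻¹ * ∑ g, ∑ i, ‖⟪e i, τ g b⟫_ℂ‖ ^ 2 := by
        simp only [inner_orbitFrameOp_self, Complex.ofReal_re, ← Finset.mul_sum]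
        rw [Finset.sum_comm]
    _ ≤ (Fintype.card G : ℝ)⁻¹ * ∑ _g : G, ‖b‖ ^ 2 := by gcongr; exact hbessel _
    _ = ‖b‖ ^ 2 := by simp

lemma IsUnitaryRep.mul_finrank_le_of_orbitFrameOp_eq_smul (hτ : IsUnitaryRep τ)
    {U : Submodule ℂ V} [FiniteDimensional ℂ U] {c : ℝ}
    (hc : ∀ u ∈ U, orbitFrameOp τ b u = (c : ℂ) • u) :
    c * Module.finrank ℂ U ≤ ‖b‖ ^ 2 := by
  let e := stdOrthonormalBasis ℂ U
  have he : Orthonormal ℂ fun i => (e i : V) := e.orthonormal.comp_linearIsometry U.subtypeₗᵢ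
  have hdiag (i) : (⟪(e i : V), orbitFrameOp τ b (e i)⟫_ℂ).re = c := by
    rw [hc _ (e i).2, inner_smul_right, inner_self_eq_norm_sq_to_K, he.1 i]
    simp
  simpa [hdiag, mul_comm] using hτ.sum_re_inner_orbitFrameOp_le (b := b) he

end OrbitFrameOp

section InvDimOp

variable {G J : Type*} [Group G] [Fintype G] [Fintype J] {W : J → Type*}
  [∀ j, NormedAddCommGroup (W j)] [∀ j, InnerProductSpace ℂ (W j)]
  {σ : ∀ j, Representation ℂ G (W j)} {V : Type*} [NormedAddCommGroup V] [InnerProductSpace ℂ V]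
  {τ : Representation ℂ G V}

/-- The operator acting as `1 / dim σ_j` on each `σ_j`-isotypic component of `τ`, for a complete
family `σ`. The isotypic projections enter squared, so that their symmetry alone turns its quadratic
form into `∑ j, ‖Π_j v‖ ^ 2 / dim σ_j`. -/
def invDimOp (σ : ∀ j, Representation ℂ G (W j)) (τ : Representation ℂ G V) : V →ₗ[ℂ] V :=
  ∑ j, (Module.finrank ℂ (W j) : ℂ)⁻¹ • (isotypicProj (σ j) τ ∘ₗ isotypicProj (σ j) τ)

lemma invDimOp_apply (v : V) :
    invDimOp σ τ v = ∑ j, (Module.finrank ℂ (W j) : ℂ)⁻¹ •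
      isotypicProj (σ j) τ (isotypicProj (σ j) τ v) := by
  simp [invDimOp, LinearMap.sum_apply]

variable [∀ j, FiniteDimensional ℂ (W j)]

lemma invDimOp_apply_comm (h : G) (v : V) : invDimOp σ τ (τ h v) = τ h (invDimOp σ τ v) := by
  simp only [invDimOp_apply, isotypicProj_apply_comm, map_sum, map_smul]

lemma IsCompleteFamily.invDimOp_apply_intertwiningMap (hσ : IsCompleteFamily W σ) {j : J}
    (f : (σ j).IntertwiningMap τ) (w : W j) :
    invDimOp σ τ (f w) = (Module.finrank ℂ (W j) : ℂ)⁻¹ • f w := by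
  rw [invDimOp_apply, Finset.sum_eq_single j]
  · simp only [isotypicProj, ← map_isoProj]
    simp only [hσ.isotypicProj_self, LinearMap.id_apply]
  · intro i _ hij
    simp only [isotypicProj, ← map_isoProj]
    simp only [hσ.isotypicProj_of_ne hij, LinearMap.zero_apply, map_zero, smul_zero]
  · simp

lemma IsCompleteFamily.isSymmetric_invDimOp (hσ : IsCompleteFamily W σ) (hτ : IsUnitaryRep τ) :
    (invDimOp σ τ).IsSymmetric := by
  intro v w
  have hsymm (j : J) := (hσ.1 j).isSymmetric_isotypicProj hτ
  simp only [invDimOp_apply, sum_inner, inner_sum, inner_smul_left, inner_smul_right,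
    hsymm _ _, map_inv₀, map_natCast]

lemma IsCompleteFamily.inner_invDimOp_self (hσ : IsCompleteFamily W σ) (hτ : IsUnitaryRep τ)
    (v : V) :
    ⟪v, invDimOp σ τ v⟫_ℂ =
      (∑ j, ‖isotypicProj (σ j) τ v‖ ^ 2 / Module.finrank ℂ (W j) : ℝ) := by
  push_cast
  simp only [invDimOp_apply, inner_sum, inner_smul_right]
  refine Finset.sum_congr rfl fun j _ => ?_
  rw [← (hσ.1 j).isSymmetric_isotypicProj hτ, inner_self_eq_norm_sq_to_K, div_eq_inv_mul]
  rfl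

variable [FiniteDimensional ℂ V]

theorem IsCompleteFamily.orbitFrameOp_le (hσ : IsCompleteFamily W σ) (hτ : IsUnitaryRep τ)
    (b : V) : orbitFrameOp τ b ≤ ((‖b‖ ^ 2 : ℝ) : ℂ) • invDimOp σ τ := by
  have hreal : (starRingEnd ℂ) ((‖b‖ ^ 2 : ℝ) : ℂ) = ((‖b‖ ^ 2 : ℝ) : ℂ) := Complex.conj_ofReal _
  refine hσ.isPositive_of_forall_intertwiningMap (τ := τ)
    (((hσ.isSymmetric_invDimOp hτ).smul hreal).sub isSymmetric_orbitFrameOp) (fun g v => ?_)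
    fun j f μ hf hμ => ?_
  · simp [invDimOp_apply_comm, hτ.orbitFrameOp_apply_comm]
  · have hd : (0 : ℝ) < Module.finrank ℂ (W j) := by exact_mod_cast (hσ.2.1 j).finrank_pos
    have hscalar : ∀ u ∈ LinearMap.range f.toLinearMap,
        orbitFrameOp τ b u = ((‖b‖ ^ 2 / Module.finrank ℂ (W j) - μ : ℝ) : ℂ) • u := by
      rintro _ ⟨w, rfl⟩
      have hw := hμ w
      rw [LinearMap.sub_apply, LinearMap.smul_apply, hσ.invDimOp_apply_intertwiningMap,
        sub_eq_iff_eq_add, ← sub_eq_iff_eq_add', smul_smul] at hw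
      push_cast
      rw [sub_smul, div_eq_mul_inv]
      exact_mod_cast hw.symm
    have hle := hτ.mul_finrank_le_of_orbitFrameOp_eq_smul hscalar
    rw [LinearMap.finrank_range_of_inj hf, sub_mul, div_mul_cancel₀ _ hd.ne'] at hle
    exact nonneg_of_mul_nonneg_left (by linarith) hd

theorem IsCompleteFamily.sum_norm_sq_inner_le (hσ : IsCompleteFamily W σ) (hτ : IsUnitaryRep τ)
    (b v : V) :
    (Fintype.card G : ℝ)⁻¹ * ∑ g, ‖⟪v, τ g b⟫_ℂ‖ ^ 2 ≤
      ‖b‖ ^ 2 * ∑ j, ‖isotypicProj (σ j) τ v‖ ^ 2 / Module.finrank ℂ (W j) := by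
  have h := (hσ.orbitFrameOp_le hτ b).inner_nonneg_right v
  rw [LinearMap.sub_apply, inner_sub_right, LinearMap.smul_apply, inner_smul_right, sub_nonneg,
    inner_orbitFrameOp_self, hσ.inner_invDimOp_self hτ] at h
  exact_mod_cast h

end InvDimOp

section MatrixCoefficients

lemma sum_sum_mul_conj {ι : Type*} [Fintype ι] (z : ι → ℂ) :
    ∑ i₁, ∑ i₂, z i₁ * starRingEnd ℂ (z i₂) = ((‖∑ i, z i‖ ^ 2 : ℝ) : ℂ) := by
  rw [← Finset.sum_mul_sum, ← map_sum, RCLike.mul_conj]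
  norm_cast

variable {G V : Type*} [Group G] [NormedAddCommGroup V] [InnerProductSpace ℂ V]

lemma IsUnitaryRep.norm_sum_inner_apply_inv {ι : Type*} [Fintype ι]
    {τ : ι → Representation ℂ G V} (hτ : ∀ i, IsUnitaryRep (τ i)) (b : V) (g : G) :
    ‖∑ i, ⟪b, τ i g⁻¹ b⟫_ℂ‖ = ‖∑ i, ⟪b, τ i g b⟫_ℂ‖ := by
  simp only [← (hτ _).inner_apply_left]
  rw [← RCLike.norm_conj, map_sum]
  simp only [inner_conj_symm]

variable [FiniteDimensional ℂ V] [Fintype G] {J : Type*} [Fintype J]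
  {W : J → Type*} [∀ j, NormedAddCommGroup (W j)] [∀ j, InnerProductSpace ℂ (W j)]
  [∀ j, FiniteDimensional ℂ (W j)] {σ : ∀ j, Representation ℂ G (W j)}

lemma IsCompleteFamily.sum_norm_sq_sum_inner_le (hσ : IsCompleteFamily W σ) {ι : Type*}
    [Fintype ι] {τ : ι → Representation ℂ G V} (hτ : ∀ i, IsUnitaryRep (τ i)) (b : V) :
    (Fintype.card G : ℝ)⁻¹ * ∑ g, ‖∑ i, ⟪b, τ i g b⟫_ℂ‖ ^ 2 ≤
      Fintype.card ι * (‖b‖ ^ 2 * ∑ i, ∑ j,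
        ‖isotypicProj (σ j) (τ i) b‖ ^ 2 / Module.finrank ℂ (W j)) := by
  have hcauchy (g : G) :
      ‖∑ i, ⟪b, τ i g b⟫_ℂ‖ ^ 2 ≤ Fintype.card ι * ∑ i, ‖⟪b, τ i g b⟫_ℂ‖ ^ 2 :=
    (pow_le_pow_left₀ (norm_nonneg _) (norm_sum_le _ _) 2).trans sq_sum_le_card_mul_sum_sq
  calc (Fintype.card G : ℝ)⁻¹ * ∑ g, ‖∑ i, ⟪b, τ i g b⟫_ℂ‖ ^ 2
      ≤ (Fintype.card G : ℝ)⁻¹ * ∑ g, Fintype.card ι * ∑ i, ‖⟪b, τ i g b⟫_ℂ‖ ^ 2 := by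
        gcongr; exact hcauchy _
    _ = Fintype.card ι * ∑ i, (Fintype.card G : ℝ)⁻¹ * ∑ g, ‖⟪b, τ i g b⟫_ℂ‖ ^ 2 := by
        rw [← Finset.mul_sum, Finset.sum_comm, ← Finset.mul_sum, mul_left_comm]
    _ ≤ Fintype.card ι * ∑ i, ‖b‖ ^ 2 * ∑ j,
          ‖isotypicProj (σ j) (τ i) b‖ ^ 2 / Module.finrank ℂ (W j) := by
        refine mul_le_mul_of_nonneg_left (Finset.sum_le_sum fun i _ => ?_) (Nat.cast_nonneg _)
        exact hσ.sum_norm_sq_inner_le (hτ i) b b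
    _ = _ := by rw [← Finset.mul_sum]

theorem stmt10_general (hσ : IsCompleteFamily W σ) {U : Type*} [NormedAddCommGroup U]
    [InnerProductSpace ℂ U] [FiniteDimensional ℂ U] {π : Representation ℂ G U}
    (hπ : IsUnitaryRep π) {ι : Type*} [Fintype ι] {τ : ι → Representation ℂ G V}
    (hτ : ∀ i, IsUnitaryRep (τ i)) (b : V) :
    ∑ i₁, ∑ i₂, (Module.finrank ℂ U : ℂ) / Fintype.card G *
        ∑ g, starRingEnd ℂ (repChar π g) *
          (⟪b, τ i₁ g b⟫_ℂ * starRingEnd ℂ ⟪b, τ i₂ g b⟫_ℂ)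
      ≤ ((Fintype.card ι * Module.finrank ℂ U ^ 2 * (‖b‖ ^ 2 *
          ∑ i, ∑ j, ‖isotypicProj (σ j) (τ i) b‖ ^ 2 / Module.finrank ℂ (W j)) : ℝ) : ℂ) := by
  have hchar := hπ.sum_conj_repChar_mul_le (fun g => sq_nonneg ‖∑ i, ⟪b, τ i g b⟫_ℂ‖)
    fun g => by rw [IsUnitaryRep.norm_sum_inner_apply_inv hτ]
  have hmain := hσ.sum_norm_sq_sum_inner_le hτ b
  set d : ℝ := (Module.finrank ℂ U : ℝ) with hd
  calc
    _ = ((d / Fintype.card G : ℝ) : ℂ) *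
          ∑ g, starRingEnd ℂ (repChar π g) * ((‖∑ i, ⟪b, τ i g b⟫_ℂ‖ ^ 2 : ℝ) : ℂ) := by
        simp only [← sum_sum_mul_conj, Finset.mul_sum]
        simp only [Finset.sum_comm (s := Finset.univ (α := G))]
        simp [hd]
    _ ≤ ((d / Fintype.card G : ℝ) : ℂ) * ((d * ∑ g, ‖∑ i, ⟪b, τ i g b⟫_ℂ‖ ^ 2 : ℝ) : ℂ) := by
        refine mul_le_mul_of_nonneg_left hchar ?_
        exact_mod_cast (by positivity : 0 ≤ d / Fintype.card G)
    _ = ((d ^ 2 * ((Fintype.card G : ℝ)⁻¹ * ∑ g, ‖∑ i, ⟪b, τ i g b⟫_ℂ‖ ^ 2) : ℝ) : ℂ) := by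
        push_cast
        ring
    _ ≤ _ := by
        rw [Complex.real_le_real, mul_comm (Fintype.card ι : ℝ), mul_assoc]
        gcongr

end MatrixCoefficients

/-- The homomorphism `g ↦ g^I` from `G` to `G^k`, along which a representation of `G^k` restricts
to one of `G`. -/
def onIHom (G : Type*) [Group G] {k : ℕ} (I : Finset (Fin k)) : G →* (Fin k → G) where
  toFun g := onI g I
  map_one' := by ext; simp [onI]
  map_mul' g h := by ext i; by_cases hi : i ∈ I <;> simp [onI, hi]

/-- For a unitary representation `ρ` of `G^k`, a unit vector `b`, and `j ∈ J`,
`Σ_{I₁,I₂⊆[k]} (d_j/|G|) Σ_g conj(χ_j(g)) ⟪b,ρ(g^{I₁})b⟫ conj(⟪b,ρ(g^{I₂})b⟫)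
  ≤ 2^k d_j² Σ_{I⊆[k]} Σ_{j'} ‖Π_{j'}^I b‖²/d_{j'}`. -/
theorem stmt10 {G : Type*} [Group G] [Fintype G]
    {J : Type*} [Fintype J]
    (W : J → Type*) [∀ j, NormedAddCommGroup (W j)] [∀ j, InnerProductSpace ℂ (W j)]
    [∀ j, FiniteDimensional ℂ (W j)]
    (σ : ∀ j, Representation ℂ G (W j)) (hfam : IsCompleteFamily W σ)
    {k : ℕ} (hk : 1 ≤ k)
    {V : Type*} [NormedAddCommGroup V] [InnerProductSpace ℂ V] [FiniteDimensional ℂ V]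
    (ρ : Representation ℂ (Fin k → G) V) (hρu : IsUnitaryRep ρ)
    (b : V) (hb : ‖b‖ = 1) (j : J) :
    ∑ I₁ : Finset (Fin k), ∑ I₂ : Finset (Fin k),
        (Module.finrank ℂ (W j) : ℂ) / (Fintype.card G : ℂ) *
          ∑ g : G, starRingEnd ℂ (repChar (σ j) g) *
            (⟪b, ρ (onI g I₁) b⟫_ℂ * starRingEnd ℂ ⟪b, ρ (onI g I₂) b⟫_ℂ)
      ≤ (((2 : ℝ) ^ k * (Module.finrank ℂ (W j) : ℝ) ^ 2 *
          ∑ I : Finset (Fin k), ∑ j',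
            ‖isoProjI ρ (Module.finrank ℂ (W j')) (repChar (σ j')) I b‖ ^ 2
              / (Module.finrank ℂ (W j') : ℝ) : ℝ) : ℂ) := by
  simpa [hb, isotypicProj, isoProj, isoProjI, onIHom] using stmt10_general hfam (hfam.1 j)
    (τ := fun I => ρ.comp (onIHom G I)) (fun I g => hρu (onI g I)) b
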